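/- arXiv:1711.00142 — 2 statements merged into one kernel-verified Lean document; each statement's English description precedes it below -/
import Mathlib

section
/- For every subset S ⊆ {1,…,N} and every j ∈ {1,…,N} \ S with u_j ≠ 0, the marginal gain is strictly positive: f(S ∪ {j}) − f(S) > 0. -/
open Matrix BigOperators

/-- The error covariance matrix `Σ̄_S = (P⁻¹ + σ⁻² ∑_{j ∈ S} u_j u_jᵀ)⁻¹`, where `u_j` is
the `j`-th row of `U`. -/
noncomputable def errCov {N k : ℕ} (σ : ℝ) (P : Matrix (Fin k) (Fin k) ℝ)
    (U : Matrix (Fin N) (Fin k) ℝ) (S : Finset (Fin N)) : Matrix (Fin k) (Fin k) ℝ :=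
  (P⁻¹ + (σ ^ 2)⁻¹ • ∑ j ∈ S, vecMulVec (U j) (U j))⁻¹

/-- The set function `f(S) = Tr(P) − Tr(Σ̄_S)`. -/
noncomputable def fMSE {N k : ℕ} (σ : ℝ) (P : Matrix (Fin k) (Fin k) ℝ)
    (U : Matrix (Fin N) (Fin k) ℝ) (S : Finset (Fin N)) : ℝ :=
  Matrix.trace P - Matrix.trace (errCov σ P U S)

/-!
Adding a sample `j` with `u_j ≠ 0` strictly increases the information matrix `Σ̄_S⁻¹` in the
Loewner order. Inversion reverses this order on positive definite matrices, because `A ≤ B` and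
`B⁻¹ ≤ A⁻¹` both say, by taking Schur complements, that the block matrix `[[B, 1], [1, A⁻¹]]` is
positive semidefinite. Finally, the trace is strictly increasing, since a positive semidefinite
matrix of trace zero vanishes.
-/

section Loewner

open scoped MatrixOrder ComplexOrder

variable {n 𝕜 : Type*} [Fintype n] [RCLike 𝕜]

theorem trace_strictMono : StrictMono (trace : Matrix n n 𝕜 → 𝕜) := by
  intro A B hAB
  have sub_posSemidef : (B - A).PosSemidef := le_iff.mp hAB.le
  have trace_sub_ne_zero : (B - A).trace ≠ 0 :=
    sub_posSemidef.trace_eq_zero_iff.not.mpr (sub_ne_zero.mpr hAB.ne')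
  have trace_sub_pos : 0 < (B - A).trace :=
    sub_posSemidef.trace_nonneg.lt_of_ne' trace_sub_ne_zero
  rwa [trace_sub, sub_pos] at trace_sub_pos

variable [DecidableEq n] {A B : Matrix n n 𝕜}

theorem inv_le_inv_iff_of_posDef (hA : A.PosDef) (hB : B.PosDef) : B⁻¹ ≤ A⁻¹ ↔ A ≤ B := by
  have := hA.isUnit.invertible
  have := hB.isUnit.invertible
  have schur_B : (fromBlocks B 1 1ᴴ A⁻¹).PosSemidef ↔ B⁻¹ ≤ A⁻¹ := by
    simpa [le_iff] using hB.fromBlocks₁₁ 1 A⁻¹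
  have schur_A : (fromBlocks B 1 1ᴴ A⁻¹).PosSemidef ↔ A ≤ B := by
    simpa [le_iff] using PosDef.fromBlocks₂₂ B 1 hA.inv
  exact schur_B.symm.trans schur_A

theorem inv_lt_inv_of_posDef (hA : A.PosDef) (hB : B.PosDef) (hAB : A < B) : B⁻¹ < A⁻¹ := by
  simpa only [lt_iff_le_not_ge, inv_le_inv_iff_of_posDef hA hB, inv_le_inv_iff_of_posDef hB hA]
    using hAB

end Loewner

section Information

open scoped MatrixOrder

variable {ι n : Type*} [Fintype n] [DecidableEq n] {σ : ℝ} {P : Matrix n n ℝ} {U : Matrix ι n ℝ}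
  {S : Finset ι} {j : ι}

/-- The information matrix `P⁻¹ + σ⁻² ∑_{j ∈ S} u_j u_jᵀ`, whose inverse is the error covariance
`errCov σ P U S`. -/
noncomputable def infoMatrix (σ : ℝ) (P : Matrix n n ℝ) (U : Matrix ι n ℝ) (S : Finset ι) :
    Matrix n n ℝ :=
  P⁻¹ + (σ ^ 2)⁻¹ • ∑ j ∈ S, vecMulVec (U j) (U j)

theorem infoMatrix_posDef (hP : P.PosDef) : (infoMatrix σ P U S).PosDef := by
  have sum_posSemidef : (∑ j ∈ S, vecMulVec (U j) (U j)).PosSemidef :=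
    posSemidef_sum S fun j _ ↦ posSemidef_vecMulVec_self_star (U j)
  exact hP.inv.add_posSemidef (sum_posSemidef.smul (by positivity))

theorem infoMatrix_insert [DecidableEq ι] (hj : j ∉ S) :
    infoMatrix σ P U (insert j S) = infoMatrix σ P U S + (σ ^ 2)⁻¹ • vecMulVec (U j) (U j) := by
  rw [infoMatrix, infoMatrix, Finset.sum_insert hj, smul_add]
  abel

theorem infoMatrix_lt_infoMatrix_insert [DecidableEq ι] (hσ : σ ≠ 0) (hj : j ∉ S) (hu : U j ≠ 0) :
    infoMatrix σ P U S < infoMatrix σ P U (insert j S) := by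
  have update_nonneg : 0 ≤ (σ ^ 2)⁻¹ • vecMulVec (U j) (U j) :=
    nonneg_iff_posSemidef.mpr ((posSemidef_vecMulVec_self_star (U j)).smul (by positivity))
  have update_ne_zero : (σ ^ 2)⁻¹ • vecMulVec (U j) (U j) ≠ 0 :=
    smul_ne_zero (by positivity) (vecMulVec_ne_zero hu hu)
  rw [infoMatrix_insert hj]
  exact lt_add_of_pos_right _ (update_nonneg.lt_of_ne' update_ne_zero)

theorem errCov_eq_inv_infoMatrix {N k : ℕ} (σ : ℝ) (P : Matrix (Fin k) (Fin k) ℝ)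
    (U : Matrix (Fin N) (Fin k) ℝ) (S : Finset (Fin N)) :
    errCov σ P U S = (infoMatrix σ P U S)⁻¹ :=
  rfl

end Information

theorem marginal_gain_pos_general {N k : ℕ} {σ : ℝ} (hσ : σ ≠ 0)
    {P : Matrix (Fin k) (Fin k) ℝ} (hP : P.PosDef) {U : Matrix (Fin N) (Fin k) ℝ}
    {S : Finset (Fin N)} {j : Fin N} (hj : j ∉ S) (hu : U j ≠ 0) :
    0 < fMSE σ P U (insert j S) - fMSE σ P U S := by
  have trace_errCov_lt : (errCov σ P U (insert j S)).trace < (errCov σ P U S).trace := by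
    rw [errCov_eq_inv_infoMatrix, errCov_eq_inv_infoMatrix]
    exact trace_strictMono <| inv_lt_inv_of_posDef (infoMatrix_posDef hP) (infoMatrix_posDef hP)
      (infoMatrix_lt_infoMatrix_insert hσ hj hu)
  rw [fMSE, fMSE]
  linarith

/-- For every subset `S ⊆ {1,…,N}` and every `j ∉ S` with `u_j ≠ 0`, the marginal gain is
strictly positive: `f(S ∪ {j}) − f(S) > 0`. -/
theorem marginal_gain_pos {N k : ℕ} (hN : 0 < N) (hk : 0 < k) (hkN : k ≤ N)
    (σ : ℝ) (hσ : 0 < σ)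
    (P : Matrix (Fin k) (Fin k) ℝ) (hP : P.PosDef)
    (U : Matrix (Fin N) (Fin k) ℝ) (S : Finset (Fin N)) (j : Fin N) (hj : j ∉ S)
    (hu : U j ≠ 0) :
    0 < fMSE σ P U (insert j S) - fMSE σ P U S :=
  marginal_gain_pos_general hσ.ne' hP hj hu
end

section
/- Let k ≥ 1 and let O ⊆ X with |O| ≤ k. Then for every subset S ⊆ X with O \ S nonempty, f(O) − f(S) ≤ c · k · max_{j ∈ O \ S} (f(S ∪ {j}) − f(S)). -/
open Finset BigOperators

/-!
Add the elements of `O \ S` to `S` one at a time. Each of them is added to a set containing `S`, so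
the curvature bound says that it gains at most `c` times what it would gain on top of `S` alone.
Telescoping bounds `f (S ∪ O) - f S`, and hence `f O - f S`, by `c` times the sum of these gains.
-/

section ElementwiseCurvature

variable {α R : Type*} [DecidableEq α]

/-- The marginal gain `f_j(S) = f(S ∪ {j}) - f(S)` of an element `j` over a set `S`. -/
def marginalGain [Sub R] (f : Finset α → R) (j : α) (S : Finset α) : R :=
  f (insert j S) - f S

theorem marginalGain_nonneg [AddCommGroup R] [PartialOrder R] [IsOrderedAddMonoid R]
    {f : Finset α → R} (hf : Monotone f) (j : α) (S : Finset α) : 0 ≤ marginalGain f j S :=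
  sub_nonneg.2 (hf (subset_insert j S))

variable [Ring R]

/-- The maximum element-wise curvature of `f` is at most `c`: enlarging the set multiplies the
marginal gain of an outside element by at most `c`. The bound is stated without division, so that
it makes sense when a marginal gain vanishes. -/
def ElementwiseCurvatureLE [LE R] (f : Finset α → R) (c : R) : Prop :=
  ∀ ⦃S T : Finset α⦄ ⦃j : α⦄, S ⊆ T → j ∉ T → marginalGain f j T ≤ c * marginalGain f j S

namespace ElementwiseCurvatureLE

theorem union_sub_le_mul_sum_marginalGain [PartialOrder R] [IsOrderedAddMonoid R]
    {f : Finset α → R} {c : R} (hfc : ElementwiseCurvatureLE f c) {S A : Finset α}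
    (hSA : Disjoint S A) : f (S ∪ A) - f S ≤ c * ∑ j ∈ A, marginalGain f j S := by
  induction A using Finset.induction_on with
  | empty => simp
  | insert a A haA ih =>
    obtain ⟨haS, hSA⟩ := disjoint_insert_right.1 hSA
    have ha : a ∉ S ∪ A := by simp [haS, haA]
    calc f (S ∪ insert a A) - f S
        = marginalGain f a (S ∪ A) + (f (S ∪ A) - f S) := by
          rw [union_insert, marginalGain, sub_add_sub_cancel]
      _ ≤ c * marginalGain f a S + c * ∑ j ∈ A, marginalGain f j S :=
          add_le_add (hfc subset_union_left ha) (ih hSA)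
      _ = c * ∑ j ∈ insert a A, marginalGain f j S := by
          rw [sum_insert haA, mul_add]

theorem sub_le_mul_sum_marginalGain [PartialOrder R] [IsOrderedAddMonoid R]
    {f : Finset α → R} {c : R} (hfc : ElementwiseCurvatureLE f c) (hf : Monotone f)
    (S O : Finset α) : f O - f S ≤ c * ∑ j ∈ O \ S, marginalGain f j S :=
  calc f O - f S
      ≤ f (S ∪ O \ S) - f S := by
        rw [union_sdiff_self_eq_union]
        exact sub_le_sub_right (hf subset_union_right) _
    _ ≤ c * ∑ j ∈ O \ S, marginalGain f j S :=
        hfc.union_sub_le_mul_sum_marginalGain disjoint_sdiff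

end ElementwiseCurvatureLE

theorem sum_marginalGain_le_mul_sup' [LinearOrder R] [IsOrderedRing R] {f : Finset α → R}
    (hf : Monotone f) (S : Finset α) {A : Finset α} (hA : A.Nonempty) {k : ℕ} (hk : #A ≤ k) :
    ∑ j ∈ A, marginalGain f j S ≤ k * A.sup' hA (marginalGain f · S) := by
  have sup_nonneg : 0 ≤ A.sup' hA (marginalGain f · S) :=
    have ⟨j, hj⟩ := hA
    (marginalGain_nonneg hf j S).trans (le_sup' (marginalGain f · S) hj)
  calc ∑ j ∈ A, marginalGain f j S
      ≤ #A • A.sup' hA (marginalGain f · S) :=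
        sum_le_card_nsmul _ _ _ fun _ hj => le_sup' (marginalGain f · S) hj
    _ ≤ k • A.sup' hA (marginalGain f · S) := nsmul_le_nsmul_left sup_nonneg hk
    _ = k * A.sup' hA (marginalGain f · S) := nsmul_eq_mul _ _

theorem weak_submodular_max_bound_general [LinearOrder R] [IsOrderedRing R] {f : Finset α → R}
    (hf : Monotone f) {c : R} (hc : 0 ≤ c) (hfc : ElementwiseCurvatureLE f c) {k : ℕ}
    {O S : Finset α} (hk : #(O \ S) ≤ k) (hOS : (O \ S).Nonempty) :
    f O - f S ≤ c * k * (O \ S).sup' hOS (marginalGain f · S) :=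
  calc f O - f S
      ≤ c * ∑ j ∈ O \ S, marginalGain f j S := hfc.sub_le_mul_sum_marginalGain hf S O
    _ ≤ c * (k * (O \ S).sup' hOS (marginalGain f · S)) :=
        mul_le_mul_of_nonneg_left (sum_marginalGain_le_mul_sup' hf S hOS hk) hc
    _ = c * k * (O \ S).sup' hOS (marginalGain f · S) := (mul_assoc _ _ _).symm

end ElementwiseCurvature

/-- Let `X` be a finite set and `f` a monotone nondecreasing set function with `f(∅) = 0`
whose maximum element-wise curvature is at most `c` (with `c ≥ 1`). Let `k ≥ 1` and let
`O ⊆ X` with `|O| ≤ k`. Then for every subset `S ⊆ X` with `O \ S` nonempty,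
`f(O) − f(S) ≤ c·k·max_{j ∈ O \ S} (f(S ∪ {j}) − f(S))`. -/
theorem weak_submodular_max_bound {X : Type*} [Fintype X] [DecidableEq X]
    (f : Finset X → ℝ)
    (hmono : ∀ S T : Finset X, S ⊆ T → f S ≤ f T)
    (hempty : f ∅ = 0)
    (c : ℝ) (hc : 1 ≤ c)
    (hcurv : ∀ S T : Finset X, ∀ j : X, S ⊆ T → j ∉ T →
      f (insert j T) - f T ≤ c * (f (insert j S) - f S))
    (k : ℕ) (hk : 1 ≤ k) (O : Finset X) (hO : O.card ≤ k)
    (S : Finset X) (hOS : (O \ S).Nonempty) :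
    f O - f S ≤ c * k * (O \ S).sup' hOS (fun j => f (insert j S) - f S) := by
  exact weak_submodular_max_bound_general hmono (zero_le_one.trans hc) hcurv
    ((card_le_card sdiff_subset).trans hO) hOS
end
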